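/- Let u be a narrow pivot of the ω-cloud Ω of a convex polygon P, and let v, w be points on Ω with τ(v,u) = τ(u,w) = 2(π−ω), where τ denotes total angular measure along Ω. Then the supporting circle of every arc of Ω strictly between v and w passes through u. -/

import Mathlib

open EuclideanGeometry Real Set
open scoped Classical

noncomputable section

abbrev Plane := EuclideanSpace ℝ (Fin 2)

/-- The unit vector in direction `θ`. -/
def unitVec (θ : ℝ) : Plane := (WithLp.equiv 2 (Fin 2 → ℝ)).symm ![Real.cos θ, Real.sin θ]

/-- The closed ray from `x` in direction `d`. -/
def ray (x d : Plane) : Set Plane := {y | ∃ t : ℝ, 0 ≤ t ∧ y = x + t • d}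

/-- The closed wedge with apex `x` bounded by the rays in directions `d₁` and `d₂`. -/
def wedgeSet (x d₁ d₂ : Plane) : Set Plane :=
  {y | ∃ s t : ℝ, 0 ≤ s ∧ 0 ≤ t ∧ y = x + s • d₁ + t • d₂}

/-- The wedge with apex `x`, arm directions `d₁`, `d₂` (unit vectors at angle `ω`),
is a minimal `ω`-wedge for `P`: it contains `P` and both arms touch `P`. -/
def IsMinWedge (P : Set Plane) (ω : ℝ) (x d₁ d₂ : Plane) : Prop :=
  ‖d₁‖ = 1 ∧ ‖d₂‖ = 1 ∧ InnerProductGeometry.angle d₁ d₂ = ω ∧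
  P ⊆ wedgeSet x d₁ d₂ ∧ (P ∩ ray x d₁).Nonempty ∧ (P ∩ ray x d₂).Nonempty

/-- The `ω`-cloud of `P`: the locus of apices of all minimal `ω`-wedges. -/
def omegaCloud (P : Set Plane) (ω : ℝ) : Set Plane := {x | ∃ d₁ d₂, IsMinWedge P ω x d₁ d₂}

/-- `V` is the vertex set of a convex polygon: at least 3 points, in strictly convex position. -/
def IsConvexPolygon (V : Finset Plane) : Prop :=
  3 ≤ V.card ∧ ∀ v ∈ V, v ∉ convexHull ℝ ((V.erase v : Finset Plane) : Set Plane)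

/-- The interior angle of a convex body `P` at a boundary point `v`, defined as the
supremum of angles `∠ a v b` over `a, b ∈ P \ {v}`. -/
def interiorAngle (P : Set Plane) (v : Plane) : ℝ :=
  sSup {θ : ℝ | ∃ a ∈ P, ∃ b ∈ P, a ≠ v ∧ b ≠ v ∧ θ = EuclideanGeometry.angle a v b}

/-- A circular arc, given by center, radius, starting angle and angular extent. -/
structure CircArc where
  center : Plane
  radius : ℝ
  start : ℝ
  delta : ℝ

/-- The (closed) point set of a circular arc. -/
def CircArc.points (A : CircArc) : Set Plane :=
  {p | ∃ θ ∈ Set.Icc A.start (A.start + A.delta), p = A.center + A.radius • unitVec θ}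

/-- The relative interior of a circular arc. -/
def CircArc.intPoints (A : CircArc) : Set Plane :=
  {p | ∃ θ ∈ Set.Ioo A.start (A.start + A.delta), p = A.center + A.radius • unitVec θ}

/-- The start point of an arc when it is traversed clockwise. -/
def CircArc.cwStart (A : CircArc) : Plane := A.center + A.radius • unitVec (A.start + A.delta)

/-- The end point of an arc when it is traversed clockwise. -/
def CircArc.cwEnd (A : CircArc) : Plane := A.center + A.radius • unitVec A.start

/-- The set of (bisector) directions of minimal `ω`-wedges of `P` with apex `x`. -/
def wedgeDirs (P : Set Plane) (ω : ℝ) (x : Plane) : Set Plane :=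
  {d | ∃ d₁ d₂, IsMinWedge P ω x d₁ d₂ ∧ d = (‖d₁ + d₂‖)⁻¹ • (d₁ + d₂)}

/-- On every interior point of the arc `A`, the minimal `ω`-wedge of `P` touches `P`
at `p` (with one arm) and `q` (with the other arm). -/
def ContactPair (P : Set Plane) (ω : ℝ) (A : CircArc) (p q : Plane) : Prop :=
  ∀ x ∈ A.intPoints, ∃ d₁ d₂, IsMinWedge P ω x d₁ d₂ ∧ p ∈ ray x d₁ ∧ q ∈ ray x d₂

section helpers
open Filter Topology


def Lf (φ x y : ℝ) : ℝ := Real.cos φ * y - Real.sin φ * x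

structure WW {ι : Type} (ω : ℝ) (X Y : ι → ℝ) (x y φ : ℝ) (p q : ι) : Prop where
  up : ∀ v, Lf φ (X v) (Y v) ≤ Lf φ x y
  lo : ∀ v, Lf (φ - ω) x y ≤ Lf (φ - ω) (X v) (Y v)
  cp : Lf φ (X p) (Y p) = Lf φ x y
  cq : Lf (φ - ω) (X q) (Y q) = Lf (φ - ω) x y

structure ConeAt {ι : Type} (ω : ℝ) (X Y : ι → ℝ) (u : ι) (β : ℝ) : Prop where
  all : ∀ v, ∃ ρ η, 0 ≤ ρ ∧ β ≤ η ∧ η ≤ β + ω ∧ X v = X u + ρ * Real.cos η ∧ Y v = Y u + ρ * Real.sin η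
  ext : ∃ b ρ, 0 < ρ ∧ X b = X u + ρ * Real.cos β ∧ Y b = Y u + ρ * Real.sin β

lemma Lf_polar (φ x y ρ η : ℝ) : Lf φ (x + ρ * Real.cos η) (y + ρ * Real.sin η) = Lf φ x y + ρ * Real.sin (η - φ) := by
  rw [Real.sin_sub]; unfold Lf; ring

lemma gam {ω φ x y p0 p1 q0 q1 : ℝ} (h1 : Lf φ p0 p1 = Lf φ x y)
    (h2 : Lf (φ - ω) q0 q1 = Lf (φ - ω) x y) :
    2 * sin ω * x = (sin ω * (p0 + q0) + cos ω * (q1 - p1)) + cos (2*φ-ω) * (q1 - p1) - sin (2*φ-ω) * (q0 - p0) ∧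
    2 * sin ω * y = (sin ω * (p1 + q1) - cos ω * (q0 - p0)) + sin (2*φ-ω) * (q1 - p1) + cos (2*φ-ω) * (q0 - p0) := by
  unfold Lf at h1 h2
  have e : 2 * φ - ω = φ + (φ - ω) := by ring
  obtain ⟨ψ, hψ⟩ : ∃ ψ, φ - ω = ψ := ⟨_, rfl⟩
  have e2 : ω = φ - ψ := by linarith
  rw [hψ] at e h2
  rw [e, e2, Real.sin_sub, Real.cos_sub, Real.sin_add, Real.cos_add]
  constructor
  · linear_combination (2 * cos ψ) * h1 - 2 * cos φ * h2 
  · linear_combination (2 * sin ψ) * h1 - 2 * sin φ * h2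

lemma gam_conv {ω φ x y p0 p1 q0 q1 : ℝ} (hs : sin ω ≠ 0)
    (h1 : 2 * sin ω * x = (sin ω * (p0 + q0) + cos ω * (q1 - p1)) + cos (2*φ-ω) * (q1 - p1) - sin (2*φ-ω) * (q0 - p0))
    (h2 : 2 * sin ω * y = (sin ω * (p1 + q1) - cos ω * (q0 - p0)) + sin (2*φ-ω) * (q1 - p1) + cos (2*φ-ω) * (q0 - p0)) :
    Lf φ p0 p1 = Lf φ x y ∧ Lf (φ - ω) q0 q1 = Lf (φ - ω) x y := by
  -- compare with the actual solution point
  obtain ⟨x', hx'⟩ : ∃ x', x' = ((Lf (φ-ω) q0 q1) * cos φ - (Lf φ p0 p1) * cos (φ-ω)) / sin ω := ⟨_, rfl⟩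
  obtain ⟨y', hy'⟩ : ∃ y', y' = ((Lf (φ-ω) q0 q1) * sin φ - (Lf φ p0 p1) * sin (φ-ω)) / sin ω := ⟨_, rfl⟩
  rw [eq_div_iff hs] at hx' hy'
  have hd : sin ω = sin φ * cos (φ-ω) - cos φ * sin (φ-ω) := by
    rw [← Real.sin_sub]; congr 1; ring
  have k1 : Lf φ p0 p1 = Lf φ x' y' := by
    apply mul_right_cancel₀ hs
    have : Lf φ x' y' * sin ω = cos φ * (y' * sin ω) - sin φ * (x' * sin ω) := by unfold Lf; ring
    rw [this, hx', hy', hd]; ring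
  have k2 : Lf (φ-ω) q0 q1 = Lf (φ-ω) x' y' := by
    apply mul_right_cancel₀ hs
    have : Lf (φ-ω) x' y' * sin ω = cos (φ-ω) * (y' * sin ω) - sin (φ-ω) * (x' * sin ω) := by unfold Lf; ring
    rw [this, hx', hy', hd]; ring
  obtain ⟨g1, g2⟩ := gam k1 k2
  have hs2 : 2 * sin ω ≠ 0 := by positivity
  have : x = x' := mul_left_cancel₀ hs2 (h1.trans g1.symm)
  have : y = y' := mul_left_cancel₀ hs2 (h2.trans g2.symm)
  subst x y
  exact ⟨k1, k2⟩

lemma two_circ {k0 k1 t1 t2 t3 g : ℝ} (h1 : k0 * cos t1 + k1 * sin t1 = g)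
    (h2 : k0 * cos t2 + k1 * sin t2 = g) (h3 : k0 * cos t3 + k1 * sin t3 = g)
    (h12 : t2 < t1) (h23 : t3 < t2) (h13 : t1 < t3 + 2*π) : k0 = 0 ∧ k1 = 0 := by
  have a12 : sin ((t1 - t2)/2) ≠ 0 := (sin_pos_of_pos_of_lt_pi (by linarith) (by linarith)).ne'
  have a13 : sin ((t1 - t3)/2) ≠ 0 := (sin_pos_of_pos_of_lt_pi (by linarith) (by linarith)).ne'
  have a23 : sin ((t2 - t3)/2) ≠ 0 := (sin_pos_of_pos_of_lt_pi (by linarith) (by linarith)).ne'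
  have b12 : - k0 * sin ((t1+t2)/2) + k1 * cos ((t1+t2)/2) = 0 := by
    apply mul_left_cancel₀ a12
    have hc := Real.cos_sub_cos t1 t2
    have hs := Real.sin_sub_sin t1 t2
    linear_combination (h1 - h2) / 2 - k0 / 2 * hc - k1 / 2 * hs
  have b13 : - k0 * sin ((t1+t3)/2) + k1 * cos ((t1+t3)/2) = 0 := by
    apply mul_left_cancel₀ a13
    have hc := Real.cos_sub_cos t1 t3
    have hs := Real.sin_sub_sin t1 t3
    linear_combination (h1 - h3) / 2 - k0 / 2 * hc - k1 / 2 * hs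
  have e : sin ((t2 - t3)/2) = sin ((t1+t2)/2) * cos ((t1+t3)/2) - cos ((t1+t2)/2) * sin ((t1+t3)/2) := by
    rw [← Real.sin_sub]; congr 1; ring
  constructor
  · apply mul_left_cancel₀ a23
    rw [e]; linear_combination (-cos ((t1+t3)/2)) * b12 + cos ((t1+t2)/2) * b13
  · apply mul_left_cancel₀ a23
    rw [e]; linear_combination (-sin ((t1+t3)/2)) * b12 + sin ((t1+t2)/2) * b13

/-- two rotating representations agree -/
lemma rot {r a b w0 w1 t : ℝ} (h1 : r * cos a = w0 * cos b - w1 * sin b)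
    (h2 : r * sin a = w0 * sin b + w1 * cos b) :
    r * cos (a+t) = w0 * cos (b+t) - w1 * sin (b+t) ∧ r * sin (a+t) = w0 * sin (b+t) + w1 * cos (b+t) := by
  rw [Real.cos_add, Real.sin_add, Real.cos_add, Real.sin_add]
  constructor
  · linear_combination cos t * h1 - sin t * h2
  · linear_combination sin t * h1 + cos t * h2

lemma rot_eq {r a b b' w0 w1 : ℝ} (hr : 0 < r) (h1 : r * cos a = w0 * cos b - w1 * sin b)
    (h2 : r * sin a = w0 * sin b + w1 * cos b) (h3 : r * cos a = w0 * cos b' - w1 * sin b')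
    (h4 : r * sin a = w0 * sin b' + w1 * cos b') : cos (b - b') = 1 := by
  have hw : w0^2 + w1^2 = r^2 := by
    have e1 := Real.sin_sq_add_cos_sq a
    have e2 := Real.sin_sq_add_cos_sq b
    have : r^2 * (sin a^2+cos a^2) = (w0^2+w1^2) * (sin b^2+cos b^2) := by
      linear_combination (r * cos a + w0 * cos b - w1 * sin b) * h1 + (r * sin a + w0 * sin b + w1 * cos b) * h2
    rw [e1, e2] at this; linarith
  have hr2 : r^2 ≠ 0 := by positivity
  apply mul_left_cancel₀ hr2
  have e1 := Real.sin_sq_add_cos_sq a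
  rw [Real.cos_sub]
  have : (w0^2+w1^2) * (cos b * cos b' + sin b * sin b') = r^2 * (sin a^2+cos a^2) := by
    linear_combination (-r * cos a) * h1 - (r * sin a) * h2 -(w0 * cos b - w1 * sin b) * h3 - (w0 * sin b + w1 * cos b) * h4
  rw [e1, hw] at this
  exact this

lemma Lf_dist {φ x y x' y' : ℝ} {ω : ℝ} (hs : sin ω ≠ 0) (h1 : Lf φ x y = Lf φ x' y')
    (h2 : Lf (φ-ω) x y = Lf (φ-ω) x' y') : x = x' ∧ y = y' := by
  obtain ⟨a, b⟩ := gam h1 h2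
  obtain ⟨c, d⟩ := gam (φ := φ) (ω := ω) (x := x) (y := y) (p0 := x) (p1 := y) (q0 := x) (q1 := y) rfl rfl
  have hs2 : 2 * sin ω ≠ 0 := by positivity
  refine ⟨mul_left_cancel₀ hs2 ?_, mul_left_cancel₀ hs2 ?_⟩ <;> linarith

lemma Lf_per (φ x y : ℝ) (n : ℤ) : Lf (φ + n * (2*π)) x y = Lf φ x y := by
  unfold Lf; rw [Real.cos_add_int_mul_two_pi, Real.sin_add_int_mul_two_pi]

lemma WW.shift {ι : Type} {ω : ℝ} {X Y : ι → ℝ} {x y φ : ℝ} {p q : ι} (h : WW ω X Y x y φ p q) (n : ℤ) :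
    WW ω X Y x y (φ + n * (2*π)) p q := by
  have e : φ + n * (2*π) - ω = (φ - ω) + n * (2*π) := by ring
  constructor
  · intro v; rw [Lf_per, Lf_per]; exact h.up v
  · intro v; rw [e, Lf_per, Lf_per]; exact h.lo v
  · rw [Lf_per, Lf_per]; exact h.cp
  · rw [e, Lf_per, Lf_per]; exact h.cq

lemma WW.reduce {ι : Type} {ω : ℝ} {X Y : ι → ℝ} {x y φ : ℝ} {p q : ι} (h : WW ω X Y x y φ p q) (φ0 : ℝ) :
    ∃ φ' ∈ Set.Icc (φ0 - π) (φ0 + π), WW ω X Y x y φ' p q := by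
  obtain ⟨n, hn, -⟩ := existsUnique_add_zsmul_mem_Ico (show 0 < 2*π by positivity) φ (φ0 - π)
  refine ⟨φ + n * (2*π), ?_, h.shift n⟩
  rw [zsmul_eq_mul] at hn
  exact ⟨hn.1, by linarith [hn.2]⟩

lemma Lf_cont {α : Type} {l : Filter α} {f g h : α → ℝ} {a b c : ℝ} (hf : Tendsto f l (𝓝 a))
    (hg : Tendsto g l (𝓝 b)) (hh : Tendsto h l (𝓝 c)) :
    Tendsto (fun t => Lf (f t) (g t) (h t)) l (𝓝 (Lf a b c)) := by
  unfold Lf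
  exact (((Real.continuous_cos.tendsto a).comp hf).mul hh).sub (((Real.continuous_sin.tendsto a).comp hf).mul hg)

lemma limit_wedge {ι : Type} [Fintype ι] {ω : ℝ} {X Y : ι → ℝ} (hω : 0 < ω) (hω' : ω < π)
    {c0 c1 r θ0 δ : ℝ} (hr : 0 < r) (hδ : 0 < δ)
    (hΩ : ∀ θ ∈ Set.Icc θ0 (θ0 + δ), ∃ φ p q, WW ω X Y (c0 + r * cos θ) (c1 + r * sin θ) φ p q)
    (φ0 : ℝ) :
    ∃ φs ∈ Set.Icc (φ0 - π) (φ0 + π), ∃ p q,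
      WW ω X Y (c0 + r * cos θ0) (c1 + r * sin θ0) φs p q ∧
      (∀ t, Lf (φs + t/2) (X p) (Y p) = Lf (φs + t/2) (c0 + r * cos (θ0 + t)) (c1 + r * sin (θ0 + t)) ∧
         Lf (φs + t/2 - ω) (X q) (Y q) = Lf (φs + t/2 - ω) (c0 + r * cos (θ0 + t)) (c1 + r * sin (θ0 + t))) ∧
      (∀ ε > 0, ∃ t, 0 < t ∧ t < ε ∧
         WW ω X Y (c0 + r * cos (θ0 + t)) (c1 + r * sin (θ0 + t)) (φs + t/2) p q) ∧
      (X p - c0)^2 + (Y p - c1)^2 = r^2 := by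
  have hs : 0 < sin ω := Real.sin_pos_of_pos_of_lt_pi hω hω'
  have hex : ∀ θ, ∃ z : ℝ × ι × ι, θ ∈ Set.Icc θ0 (θ0 + δ) → z.1 ∈ Set.Icc (φ0 - π) (φ0 + π) ∧
      WW ω X Y (c0 + r * cos θ) (c1 + r * sin θ) z.1 z.2.1 z.2.2 := by
    intro θ
    obtain ⟨φ, p, q, -⟩ := hΩ θ0 ⟨le_rfl, by linarith⟩
    by_cases h : θ ∈ Set.Icc θ0 (θ0 + δ)
    · obtain ⟨φ, p, q, hw⟩ := hΩ θ h
      obtain ⟨φ', h1, h2⟩ := hw.reduce φ0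
      exact ⟨(φ', p, q), fun _ => ⟨h1, h2⟩⟩
    · exact ⟨(φ, p, q), fun h' => absurd h' h⟩
  choose z hz using hex
  let F : Ultrafilter ℝ := Ultrafilter.of (𝓝[>] θ0)
  have hF : (F : Filter ℝ) ≤ 𝓝[>] θ0 := Ultrafilter.of_le _
  have hFn : (F : Filter ℝ) ≤ 𝓝 θ0 := hF.trans nhdsWithin_le_nhds
  have hgt : ∀ ε > 0, ∀ᶠ θ in (F : Filter ℝ), θ0 < θ ∧ θ < θ0 + ε := by
    intro ε hε
    exact hF (Ioo_mem_nhdsGT (by linarith))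
  have hin : ∀ᶠ θ in (F : Filter ℝ), θ ∈ Set.Icc θ0 (θ0 + δ) :=
    (hgt δ hδ).mono fun θ h => ⟨h.1.le, h.2.le⟩
  -- constant contacts
  obtain ⟨pq, hpq⟩ : ∃ pq : ι × ι, ∀ᶠ θ in (F : Filter ℝ), (z θ).2 = pq := by
    have : ∀ᶠ θ in (F : Filter ℝ), ∃ pq ∈ (Set.univ : Set (ι × ι)), (z θ).2 = pq := 
      Eventually.of_forall fun θ => ⟨_, Set.mem_univ _, rfl⟩
    rw [Ultrafilter.eventually_exists_mem_iff Set.finite_univ] at this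
    obtain ⟨pq, -, h⟩ := this
    exact ⟨pq, h⟩
  obtain ⟨p, q⟩ := pq
  -- limit direction
  obtain ⟨φs, hφs, hlim⟩ : ∃ φs ∈ Set.Icc (φ0 - π) (φ0 + π), Tendsto (fun θ => (z θ).1) F (𝓝 φs) := by
    have hc : IsCompact (Set.Icc (φ0 - π) (φ0 + π)) := isCompact_Icc
    have := hc.ultrafilter_le_nhds (F.map fun θ => (z θ).1) (by
      rw [Filter.le_principal_iff]
      exact hin.mono fun θ h => (hz θ h).1)
    obtain ⟨a, ha, h⟩ := this
    exact ⟨a, ha, h⟩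
  have hw : ∀ᶠ θ in (F : Filter ℝ), WW ω X Y (c0 + r * cos θ) (c1 + r * sin θ) (z θ).1 p q := by
    filter_upwards [hin, hpq] with θ h1 h2
    have := (hz θ h1).2
    rw [h2] at this
    exact this
  have hid : Tendsto (fun θ : ℝ => θ) F (𝓝 θ0) := hFn
  have hcos : Tendsto (fun θ : ℝ => c0 + r * cos θ) F (𝓝 (c0 + r * cos θ0)) :=
    (((Real.continuous_cos.tendsto θ0).comp hid).const_mul r).const_add c0
  have hsin : Tendsto (fun θ : ℝ => c1 + r * sin θ) F (𝓝 (c1 + r * sin θ0)) :=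
    (((Real.continuous_sin.tendsto θ0).comp hid).const_mul r).const_add c1
  have hlim' : Tendsto (fun θ => (z θ).1 - ω) F (𝓝 (φs - ω)) := hlim.sub_const ω
  have hW0 : WW ω X Y (c0 + r * cos θ0) (c1 + r * sin θ0) φs p q := by
    constructor
    · intro v
      exact le_of_tendsto_of_tendsto (Lf_cont hlim tendsto_const_nhds tendsto_const_nhds) (Lf_cont hlim hcos hsin)
        (hw.mono fun θ h => h.up v)
    · intro v
      exact le_of_tendsto_of_tendsto (Lf_cont hlim' hcos hsin) (Lf_cont hlim' tendsto_const_nhds tendsto_const_nhds) 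
        (hw.mono fun θ h => h.lo v)
    · exact tendsto_nhds_unique_of_eventuallyEq (Lf_cont hlim tendsto_const_nhds tendsto_const_nhds) (Lf_cont hlim hcos hsin)
        (hw.mono fun θ h => h.cp)
    · exact tendsto_nhds_unique_of_eventuallyEq (Lf_cont hlim' tendsto_const_nhds tendsto_const_nhds) (Lf_cont hlim' hcos hsin)
        (hw.mono fun θ h => h.cq)
  -- circle of (p,q)
  obtain ⟨C0, hC0⟩ : ∃ C0, 2 * sin ω * C0 = sin ω * (X p + X q) + cos ω * (Y q - Y p) :=
    ⟨(sin ω * (X p + X q) + cos ω * (Y q - Y p)) / (2 * sin ω), by field_simp⟩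
  obtain ⟨C1, hC1⟩ : ∃ C1, 2 * sin ω * C1 = sin ω * (Y p + Y q) - cos ω * (X q - X p) :=
    ⟨(sin ω * (Y p + Y q) - cos ω * (X q - X p)) / (2 * sin ω), by field_simp⟩
  obtain ⟨w0, hw0⟩ : ∃ w0, 2 * sin ω * w0 = Y q - Y p := ⟨(Y q - Y p) / (2 * sin ω), by field_simp⟩
  obtain ⟨w1, hw1⟩ : ∃ w1, 2 * sin ω * w1 = X q - X p := ⟨(X q - X p) / (2 * sin ω), by field_simp⟩
  have hs2 : 2 * sin ω ≠ 0 := by positivity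
  have hform : ∀ {θ φ : ℝ}, WW ω X Y (c0 + r * cos θ) (c1 + r * sin θ) φ p q →
      c0 + r * cos θ = C0 + (w0 * cos (2*φ-ω) - w1 * sin (2*φ-ω)) ∧
      c1 + r * sin θ = C1 + (w0 * sin (2*φ-ω) + w1 * cos (2*φ-ω)) := by
    intro θ φ h
    obtain ⟨g1, g2⟩ := gam h.cp h.cq
    constructor
    · apply mul_left_cancel₀ hs2
      rw [g1]; linear_combination - hC0 - cos (2*φ-ω) * hw0 + sin (2*φ-ω) * hw1
    · apply mul_left_cancel₀ hs2
      rw [g2]; linear_combination - hC1 - sin (2*φ-ω) * hw0 - cos (2*φ-ω) * hw1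
  have hcirc : ∀ {θ φ : ℝ}, WW ω X Y (c0 + r * cos θ) (c1 + r * sin θ) φ p q →
      (c0 - C0) * cos θ + (c1 - C1) * sin θ = (w0^2+w1^2 - (c0-C0)^2 - (c1-C1)^2 - r^2) / (2*r) := by
    intro θ φ h
    obtain ⟨g1, g2⟩ := hform h
    rw [eq_div_iff (by positivity)]
    have e1 := Real.sin_sq_add_cos_sq θ
    have e2 := Real.sin_sq_add_cos_sq (2*φ-ω)
    have k1 : c0 - C0 + r * cos θ = w0 * cos (2*φ-ω) - w1 * sin (2*φ-ω) := by linarith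
    have k2 : c1 - C1 + r * sin θ = w0 * sin (2*φ-ω) + w1 * cos (2*φ-ω) := by linarith
    have : (c0 - C0 + r * cos θ)^2 + (c1 - C1 + r * sin θ)^2 = (w0^2+w1^2) * (sin (2*φ-ω)^2 + cos (2*φ-ω)^2) := by
      rw [k1, k2]; ring
    rw [e2] at this
    linear_combination this - r^2 * e1
  have hcC : c0 - C0 = 0 ∧ c1 - C1 = 0 := by
    obtain ⟨t1, h1, g1⟩ := (hw.and (hgt (2*π) (by positivity))).exists
    obtain ⟨t2, h2, g2⟩ := (hw.and (hgt (t1 - θ0) (by linarith [g1.1]))).exists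
    obtain ⟨t3, h3, g3⟩ := (hw.and (hgt (t2 - θ0) (by linarith [g2.1]))).exists
    exact two_circ (hcirc h1) (hcirc h2) (hcirc h3) (by linarith [g2.2]) (by linarith [g3.2]) (by linarith [g3.1, g1.2])
  have hrep : ∀ {θ φ : ℝ}, WW ω X Y (c0 + r * cos θ) (c1 + r * sin θ) φ p q →
      r * cos θ = w0 * cos (2*φ-ω) - w1 * sin (2*φ-ω) ∧
      r * sin θ = w0 * sin (2*φ-ω) + w1 * cos (2*φ-ω) := by
    intro θ φ h
    obtain ⟨g1, g2⟩ := hform h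
    constructor <;> linarith [hcC.1, hcC.2]
  have hrot : ∀ t, r * cos (θ0 + t) = w0 * cos (2*(φs+t/2)-ω) - w1 * sin (2*(φs+t/2)-ω) ∧
      r * sin (θ0 + t) = w0 * sin (2*(φs+t/2)-ω) + w1 * cos (2*(φs+t/2)-ω) := by
    intro t
    have e : 2*(φs+t/2)-ω = (2*φs-ω) + t := by ring
    rw [e]
    exact rot (hrep hW0).1 (hrep hW0).2
  refine ⟨φs, hφs, p, q, hW0, ?_, ?_, ?_⟩
  · intro t
    obtain ⟨g1, g2⟩ := hrot t
    apply gam_conv hs.ne'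
    · linear_combination (2 * sin ω) * g1 + hC0 + (2 * sin ω) * hcC.1 + cos (2*(φs+t/2)-ω) * hw0 - sin (2*(φs+t/2)-ω) * hw1
    · linear_combination (2 * sin ω) * g2 + hC1 + (2 * sin ω) * hcC.2 + sin (2*(φs+t/2)-ω) * hw0 + cos (2*(φs+t/2)-ω) * hw1
  · intro ε hε
    have hsm : Tendsto (fun θ => 2 * (z θ).1 - ω - (2 * (φs + (θ - θ0)/2) - ω)) F (𝓝 0) := by
      have h1 := ((hlim.const_mul 2).sub_const (2*φs)).sub (hid.sub_const θ0)
      have e0 : 2 * φs - 2 * φs - (θ0 - θ0) = 0 := by ring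
      rw [e0] at h1
      refine h1.congr fun θ => ?_
      ring
    have hsm' := hsm (Ioo_mem_nhds (show -(2*π) < 0 by linarith [Real.pi_pos]) (show (0:ℝ) < 2*π by linarith [Real.pi_pos]))
    obtain ⟨θ, ⟨h1, h2⟩, h3⟩ := ((hw.and (hgt ε hε)).and hsm').exists
    have e : θ0 + (θ - θ0) = θ := by ring
    refine ⟨θ - θ0, by linarith, by linarith, ?_⟩
    rw [e]
    have hk := hrot (θ - θ0)
    rw [e] at hk
    have hone := rot_eq hr (hrep h1).1 (hrep h1).2 hk.1 hk.2
    have := (Real.cos_eq_one_iff_of_lt_of_lt h3.1 h3.2).1 hone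
    have e3 : φs + (θ - θ0)/2 = (z θ).1 := by linarith
    rw [e3]
    exact h1
  · obtain ⟨g1, g2⟩ := hrep hW0
    have e1 := Real.sin_sq_add_cos_sq θ0
    have e2 := Real.sin_sq_add_cos_sq (2*φs-ω)
    have e3 := Real.sin_sq_add_cos_sq ω
    have hR : r^2 = w0^2+w1^2 := by
      have : r^2 * (sin θ0^2 + cos θ0^2) = (w0^2+w1^2) * (sin (2*φs-ω)^2 + cos (2*φs-ω)^2) := by
        linear_combination (r * cos θ0 + w0 * cos (2*φs-ω) - w1 * sin (2*φs-ω)) * g1 + (r * sin θ0 + w0 * sin (2*φs-ω) + w1 * cos (2*φs-ω)) * g2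
      rw [e1, e2] at this; linarith
    have k0 : X p - c0 = -(sin ω * w1 + cos ω * w0) := by
      apply mul_left_cancel₀ hs2
      linear_combination -hC0 - (2 * sin ω) * hcC.1 + sin ω * hw1 + cos ω * hw0
    have k1 : Y p - c1 = -(sin ω * w0 - cos ω * w1) := by
      apply mul_left_cancel₀ hs2
      linear_combination -hC1 - (2 * sin ω) * hcC.2 + sin ω * hw0 - cos ω * hw1
    rw [k0, k1, hR]
    linear_combination (w0^2+w1^2) * e3

lemma on_line {φ x y a b : ℝ} (h : Lf φ a b = Lf φ x y) :
    ∃ s, a = x + s * cos φ ∧ b = y + s * sin φ := by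
  refine ⟨cos φ * (a - x) + sin φ * (b - y), ?_, ?_⟩ <;> unfold Lf at h <;>
    have e := Real.sin_sq_add_cos_sq φ
  · linear_combination (-(a - x)) * e - sin φ * h
  · linear_combination (-(b - y)) * e + cos φ * h

lemma sin_np {κ : ℝ} (h1 : -π ≤ κ) (h2 : κ < π) (h : sin κ ≤ 0) : κ ≤ 0 := by
  by_contra h3
  linarith [Real.sin_pos_of_pos_of_lt_pi (not_le.1 h3) h2]

lemma sin_nn {κ : ℝ} (h1 : -π < κ) (h : 0 ≤ sin κ) : 0 ≤ κ := by
  by_contra h3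
  linarith [Real.sin_neg_of_neg_of_neg_pi_lt (not_le.1 h3) h1]

/-- range of offsets of a wedge containing a direction -/
lemma range_off {ω κ : ℝ} (hω : 0 < ω) (hω' : ω < π) (h1 : -π ≤ κ) (h2 : κ ≤ π) (ha : 0 ≤ sin κ)
    (hb : 0 ≤ sin (ω - κ)) : 0 ≤ κ ∧ κ ≤ ω := by
  have hs : 0 < sin ω := Real.sin_pos_of_pos_of_lt_pi hω hω'
  have hne : κ ≠ -π := by
    rintro rfl
    rw [sub_neg_eq_add, Real.sin_add_pi] at hb; linarith
  have h0 : 0 ≤ κ := sin_nn (lt_of_le_of_ne h1 hne.symm) ha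
  exact ⟨h0, by linarith [sin_nn (κ := ω - κ) (by linarith) hb]⟩

section
variable {ι : Type} {ω : ℝ} {X Y : ι → ℝ} {u : ι} {β : ℝ}

lemma ConeAt.up (hc : ConeAt ω X Y u β) (hω : 0 < ω) {φ : ℝ} (h1 : β + ω ≤ φ) (h2 : φ ≤ β + π) (v : ι) :
    Lf φ (X v) (Y v) ≤ Lf φ (X u) (Y u) := by
  obtain ⟨ρ, η, hρ, a, b, hx, hy⟩ := hc.all v
  rw [hx, hy, Lf_polar]
  have : sin (η - φ) ≤ 0 := Real.sin_nonpos_of_nonpos_of_neg_pi_le (by linarith) (by linarith)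
  nlinarith

lemma ConeAt.uniq (hc : ConeAt ω X Y u β) (hω : 0 < ω) {φ : ℝ} (h1 : β + ω < φ) (h2 : φ < β + π) {v : ι}
    (h : Lf φ (X v) (Y v) = Lf φ (X u) (Y u)) : X v = X u ∧ Y v = Y u := by
  obtain ⟨ρ, η, hρ, a, b, hx, hy⟩ := hc.all v
  rw [hx, hy, Lf_polar] at h
  have : sin (η - φ) < 0 := Real.sin_neg_of_neg_of_neg_pi_lt (by linarith) (by linarith)
  have h0 : ρ * sin (η - φ) = 0 := by linarith
  rcases mul_eq_zero.1 h0 with h0 | h0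
  · rw [hx, hy, h0]; simp
  · linarith

lemma apex_u (hω : 0 < ω) (hω' : ω < π) {x y φ : ℝ} {p q : ι} (hw : WW ω X Y x y φ p q)
    (h1 : ∀ v, Lf φ (X v) (Y v) ≤ Lf φ (X u) (Y u))
    (h2 : ∀ v, Lf (φ - ω) (X u) (Y u) ≤ Lf (φ - ω) (X v) (Y v)) : x = X u ∧ y = Y u := by
  have hs : 0 < sin ω := Real.sin_pos_of_pos_of_lt_pi hω hω'
  apply Lf_dist (φ := φ) hs.ne'
  · exact le_antisymm (hw.cp ▸ h1 p) (hw.up u)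
  · exact le_antisymm (hw.lo u) (hw.cq ▸ h2 q)

set_option maxHeartbeats 4000000 in
lemma step [Fintype ι] (hω : 0 < ω) (hω' : ω < π) (hc : ConeAt ω X Y u β)
    {c0 c1 r θ0 δ : ℝ} (hr : 0 < r) (hδ : 0 < δ)
    (hΩ : ∀ θ ∈ Set.Icc θ0 (θ0 + δ), ∃ φ p q, WW ω X Y (c0 + r * cos θ) (c1 + r * sin θ) φ p q)
    {φ0 : ℝ} (hφ1 : β + ω ≤ φ0) (hφ2 : φ0 < β + π)
    (hst : ∃ p q, WW ω X Y (c0 + r * cos θ0) (c1 + r * sin θ0) φ0 p q) :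
    (X u - c0)^2 + (Y u - c1)^2 = r^2 ∧
    (φ0 + δ/2 < β + π → ∃ p q, WW ω X Y (c0 + r * cos (θ0 + δ)) (c1 + r * sin (θ0 + δ)) (φ0 + δ/2) p q) := by
  have hs : 0 < sin ω := Real.sin_pos_of_pos_of_lt_pi hω hω'
  have hpi := Real.pi_pos
  obtain ⟨φs, hφs, p, q, hW, hG, hN, hC⟩ := limit_wedge hω hω' hr hδ hΩ φ0
  obtain ⟨p0, q0, hW0⟩ := hst
  obtain ⟨b, ρb, hρb, hbx, hby⟩ := hc.ext
  have hφ : φs = φ0 := by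
    rcases hφ1.eq_or_lt with h0 | h0
    · -- start at u
      subst h0
      have hβ : β + ω - ω = β := by ring
      obtain ⟨ex, ey⟩ : c0 + r * cos θ0 = X u ∧ c1 + r * sin θ0 = Y u := by
        refine apex_u hω hω' hW0 (hc.up hω le_rfl hφ2.le) fun v => ?_
        obtain ⟨ρ, η, hρ, a, b, hx, hy⟩ := hc.all v
        rw [hx, hy, Lf_polar, hβ]
        have : 0 ≤ sin (η - β) := Real.sin_nonneg_of_nonneg_of_le_pi (by linarith) (by linarith)
        nlinarith
      rw [ex, ey] at hW
      have hb1 := hW.up b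
      have hb2 := hW.lo b
      rw [hbx, hby, Lf_polar] at hb1 hb2
      have s1 : sin (β - φs) ≤ 0 := by by_contra h; nlinarith
      have s2 : 0 ≤ sin (β - (φs - ω)) := by by_contra h; nlinarith
      have hr1 := range_off (ω := ω) (κ := ω + β - φs) hω hω' (by linarith [hφs.2]) (by linarith [hφs.1])
        (by rwa [show ω + β - φs = β - (φs - ω) by ring])
        (by rw [show ω - (ω + β - φs) = -(β - φs) by ring, Real.sin_neg]; linarith)
      by_contra hne
      have hlt : φs < β + ω := lt_of_le_of_ne (by linarith [hr1.1]) hne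
      obtain ⟨t, ht0, ht1, htW⟩ := hN (min (2 * (β + ω - φs)) (2*π)) (lt_min (by linarith) (by linarith))
      have ht2 := lt_of_lt_of_le ht1 (min_le_left _ _)
      have ht3 := lt_of_lt_of_le ht1 (min_le_right _ _)
      obtain ⟨fx, fy⟩ : c0 + r * cos (θ0 + t) = X u ∧ c1 + r * sin (θ0 + t) = Y u := by
        refine apex_u hω hω' htW (fun v => ?_) fun v => ?_
        · obtain ⟨ρ, η, hρ, a, b, hx, hy⟩ := hc.all v
          have hv := hW.up v
          rw [hx, hy, Lf_polar] at hv
          rw [hx, hy, Lf_polar]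
          rcases hρ.eq_or_lt with h | h
          · rw [← h]; simp
          · have k1 : sin (η - φs) ≤ 0 := by by_contra h; nlinarith
            have k2 := sin_np (κ := η - φs) (by linarith) (by linarith) k1
            have : sin (η - (φs + t/2)) ≤ 0 := Real.sin_nonpos_of_nonpos_of_neg_pi_le (by linarith) (by linarith)
            nlinarith
        · obtain ⟨ρ, η, hρ, a, b, hx, hy⟩ := hc.all v
          have hv := hW.up v
          rw [hx, hy, Lf_polar] at hv
          rw [hx, hy, Lf_polar]
          rcases hρ.eq_or_lt with h | h
          · rw [← h]; simp
          · have k1 : sin (η - φs) ≤ 0 := by by_contra h; nlinarith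
            have k2 := sin_np (κ := η - φs) (by linarith) (by linarith) k1
            have : 0 ≤ sin (η - (φs + t/2 - ω)) := Real.sin_nonneg_of_nonneg_of_le_pi (by linarith) (by linarith)
            nlinarith
      have g1 : cos (θ0 + t) = cos θ0 := mul_left_cancel₀ hr.ne' (by linarith)
      have g2 : sin (θ0 + t) = sin θ0 := mul_left_cancel₀ hr.ne' (by linarith)
      have g3 : cos t = 1 := by
        have : cos t = cos ((θ0 + t) - θ0) := by congr 1; ring
        rw [this, Real.cos_sub, g1, g2]
        linarith [Real.sin_sq_add_cos_sq θ0]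
      have := (Real.cos_eq_one_iff_of_lt_of_lt (by linarith) ht3).1 g3
      linarith
    · -- generic
      obtain ⟨x0, hx0⟩ : ∃ x0, x0 = c0 + r * cos θ0 := ⟨_, rfl⟩
      obtain ⟨y0, hy0⟩ : ∃ y0, y0 = c1 + r * sin θ0 := ⟨_, rfl⟩
      rw [← hx0, ← hy0] at hW hW0
      obtain ⟨s, us, us'⟩ := on_line (le_antisymm (hW0.up u) (hW0.cp ▸ hc.up hω hφ1 hφ2.le p0))
      obtain ⟨t, qt, qt'⟩ := on_line hW0.cq
      have hspos : 0 < s := by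
        have h1 := hW0.lo b
        have h2 := Lf_polar (φ0 - ω) x0 y0 s φ0
        rw [← us, ← us'] at h2
        rw [hbx, hby, Lf_polar, h2] at h1
        have h3 : sin (β - (φ0 - ω)) < 0 := Real.sin_neg_of_neg_of_neg_pi_lt (by linarith) (by linarith)
        rw [show φ0 - (φ0 - ω) = ω by ring] at h1
        by_contra h; nlinarith
      have htnn : 0 ≤ t := by
        have h1 := hW0.up q0
        rw [qt, qt', Lf_polar, show φ0 - ω - φ0 = -ω by ring, Real.sin_neg] at h1
        by_contra h; nlinarith
      have htpos : 0 < t := by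
        rcases htnn.eq_or_lt with h | h
        · exfalso
          rw [← h, zero_mul, add_zero] at qt qt'
          obtain ⟨e1, e2⟩ := hc.uniq hω h0 hφ2 (v := q0) (by
            rw [qt, qt']; exact le_antisymm (hW0.cp ▸ hc.up hω hφ1 hφ2.le p0) (hW0.up u))
          have a1 : s * cos φ0 = 0 := by linarith
          have a2 : s * sin φ0 = 0 := by linarith
          have a3 : s = s * (cos φ0 * cos φ0 + sin φ0 * sin φ0) := by
            linear_combination (-s) * Real.sin_sq_add_cos_sq φ0
          have : s = 0 := by rw [a3]; linear_combination cos φ0 * a1 + sin φ0 * a2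
          linarith
        · exact h
      have k1 := hW.up u
      have k2 := hW.lo q0
      have k3 := hW.lo u
      rw [us, us', Lf_polar] at k1 k3
      rw [qt, qt', Lf_polar] at k2
      have s1 : sin (φ0 - φs) ≤ 0 := by by_contra h; nlinarith
      have s2 : 0 ≤ sin (φ0 - ω - (φs - ω)) := by by_contra h; nlinarith
      have s3 : 0 ≤ sin (φ0 - (φs - ω)) := by by_contra h; nlinarith
      have hr1 := range_off (ω := ω) (κ := φs - φ0) hω hω' (by linarith [hφs.1]) (by linarith [hφs.2])
        (by rw [show φs - φ0 = -(φ0 - φs) by ring, Real.sin_neg]; linarith)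
        (by rwa [show ω - (φs - φ0) = φ0 - (φs - ω) by ring])
      have := sin_nn (κ := φ0 - ω - (φs - ω)) (by linarith [hr1.2]) s2
      linarith [hr1.1]
  subst hφ
  obtain ⟨t, ht0, ht1, htW⟩ := hN (2 * (β + π - φs)) (by linarith)
  obtain ⟨pu, pu'⟩ : X p = X u ∧ Y p = Y u := by
    refine hc.uniq hω (φ := φs + t/2) (by linarith) (by linarith) ?_
    exact le_antisymm (hc.up hω (by linarith) (by linarith) p) (by rw [htW.cp]; exact htW.up u)
  refine ⟨by rw [← pu, ← pu']; exact hC, fun hlt => ⟨p, q, ?_⟩⟩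
  obtain ⟨g1, g2⟩ := hG δ
  have hf1 : β + ω < φs + δ/2 := by linarith
  obtain ⟨x1, hx1⟩ : ∃ x1, x1 = c0 + r * cos (θ0 + δ) := ⟨_, rfl⟩
  obtain ⟨y1, hy1⟩ : ∃ y1, y1 = c1 + r * sin (θ0 + δ) := ⟨_, rfl⟩
  obtain ⟨φ', p', q', hW'⟩ := hΩ (θ0 + δ) ⟨by linarith, le_rfl⟩
  rw [← hx1, ← hy1] at g1 g2 hW' ⊢
  have hup : ∀ v, Lf (φs + δ/2) (X v) (Y v) ≤ Lf (φs + δ/2) x1 y1 := by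
    intro v; rw [← g1, pu, pu']; exact hc.up hω hf1.le hlt.le v
  obtain ⟨s, us, us'⟩ := on_line (pu ▸ pu' ▸ g1)
  obtain ⟨ρ, η, hρ, ha, hb, qx, qy⟩ := hc.all q
  have hρ' : 0 < ρ := by
    rcases hρ.eq_or_lt with h | h
    · exfalso
      rw [← h, zero_mul, add_zero] at qx qy
      have hz : ∀ t, c0 + r * cos (θ0 + t) = X u ∧ c1 + r * sin (θ0 + t) = Y u := by
        intro t
        obtain ⟨a1, a2⟩ := hG t
        rw [pu, pu'] at a1; rw [qx, qy] at a2
        obtain ⟨b1, b2⟩ := Lf_dist hs.ne' a1 a2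
        exact ⟨b1.symm, b2.symm⟩
      have z1 := hz 0
      have z2 := hz π
      rw [add_zero] at z1
      rw [Real.cos_add_pi, Real.sin_add_pi] at z2
      have a1 : r * cos θ0 = 0 := by linarith
      have a2 : r * sin θ0 = 0 := by linarith
      have : r = 0 := by
        linear_combination (-r) * Real.sin_sq_add_cos_sq θ0 + cos θ0 * a1 + sin θ0 * a2
      linarith
    · exact h
  have hη : η ≤ φs - ω := by
    have h1 := hW.lo u
    rw [← hW.cq, qx, qy, Lf_polar] at h1
    have k1 : sin (η - (φs - ω)) ≤ 0 := by by_contra h; nlinarith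
    linarith [sin_np (κ := η - (φs - ω)) (by linarith) (by linarith) k1]
  have hspos : 0 < s := by
    have h2 := Lf_polar (φs + δ/2 - ω) x1 y1 s (φs + δ/2)
    rw [← us, ← us'] at h2
    rw [qx, qy, Lf_polar, h2, show φs + δ/2 - (φs + δ/2 - ω) = ω by ring] at g2
    have h3 : sin (η - (φs + δ/2 - ω)) < 0 := Real.sin_neg_of_neg_of_neg_pi_lt (by linarith) (by linarith)
    by_contra h; nlinarith
  refine ⟨hup, ?_, g1, g2⟩
  obtain ⟨φ1, hφ1'⟩ : ∃ φ1, φ1 = φs + δ/2 := ⟨_, rfl⟩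
  rw [← hφ1'] at g1 g2 hup us us' hf1 hlt ⊢
  obtain ⟨φ'', hφ'', hW''⟩ := hW'.reduce φ1
  intro v
  by_contra hv
  push Not at hv
  have k1 := hW''.up u
  have k2 := hW''.lo u
  rw [us, us', Lf_polar] at k1 k2
  have s1 : sin (φ1 - φ'') ≤ 0 := by by_contra h; nlinarith
  have s2 : 0 ≤ sin (φ1 - (φ'' - ω)) := by by_contra h; nlinarith
  obtain ⟨r1, r2⟩ := range_off (ω := ω) (κ := φ'' - φ1) hω hω' (by linarith [hφ''.1]) (by linarith [hφ''.2])
    (by rw [show φ'' - φ1 = -(φ1 - φ'') by ring, Real.sin_neg]; linarith)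
    (by rwa [show ω - (φ'' - φ1) = φ1 - (φ'' - ω) by ring])
  have k3 := hW''.lo v
  have hcomb : ∀ x y, sin ω * Lf (φ'' - ω) x y = sin (ω - (φ'' - φ1)) * Lf (φ1 - ω) x y + sin (φ'' - φ1) * Lf φ1 x y := by
    intro x y
    obtain ⟨κ, hκ⟩ : ∃ κ, κ = φ'' - φ1 := ⟨_, rfl⟩
    rw [← hκ, show φ'' - ω = φ1 - ω + κ by linarith]
    obtain ⟨ψ, hψ⟩ : ∃ ψ, ψ = φ1 - ω := ⟨_, rfl⟩
    rw [← hψ, show φ1 = ψ + ω by linarith]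
    unfold Lf
    simp only [Real.sin_add, Real.cos_add, Real.sin_sub]
    ring
  have k4 := hcomb x1 y1
  have k5 := hcomb (X v) (Y v)
  have hv2 := hup v
  have n1 : 0 ≤ sin (φ'' - φ1) := Real.sin_nonneg_of_nonneg_of_le_pi r1 (by linarith)
  rcases r2.eq_or_lt with h | h
  · rw [show φ'' - ω = φ1 by linarith] at k3
    have h5 := le_antisymm hv2 k3
    obtain ⟨e1, e2⟩ := hc.uniq hω hf1 hlt (v := v) (by rw [h5, ← g1, pu, pu'])
    rw [e1, e2, us, us', Lf_polar, show φ1 - (φ1 - ω) = ω by ring] at hv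
    nlinarith
  · have n2 : 0 < sin (ω - (φ'' - φ1)) := Real.sin_pos_of_pos_of_lt_pi (by linarith) (by linarith)
    nlinarith [mul_pos n2 (sub_pos.2 hv), mul_nonneg n1 (sub_nonneg.2 hv2), mul_nonneg hs.le (sub_nonneg.2 k3)]
end

section
variable {ι : Type} {ω : ℝ} {X Y : ι → ℝ} {u : ι} {β : ℝ}

lemma ConeAt.start (hω : 0 < ω) (hω' : ω < π) (hc : ConeAt ω X Y u β) :
    WW ω X Y (X u) (Y u) (β + ω) u u := by
  refine ⟨hc.up hω le_rfl (by linarith), fun v => ?_, rfl, rfl⟩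
  obtain ⟨ρ, η, hρ, a, b, hx, hy⟩ := hc.all v
  rw [hx, hy, Lf_polar]
  have : 0 ≤ sin (η - (β + ω - ω)) := Real.sin_nonneg_of_nonneg_of_le_pi (by linarith) (by linarith)
  nlinarith

lemma cone_exists [Fintype ι] (hω : 0 < ω) (hω' : ω < π) {ψ : ℝ} {p q : ι}
    (hw : WW ω X Y (X u) (Y u) ψ p q) (hne : ∃ v, ¬ (X v = X u ∧ Y v = Y u)) :
    ∃ β, ConeAt ω X Y u β := by
  classical
  have hpol : ∀ v, ∃ ρη : ℝ × ℝ, 0 ≤ ρη.1 ∧ X v = X u + ρη.1 * cos ρη.2 ∧ Y v = Y u + ρη.1 * sin ρη.2 ∧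
      ψ - ω ≤ ρη.2 ∧ ρη.2 ≤ ψ := by
    intro v
    by_cases h : X v = X u ∧ Y v = Y u
    · exact ⟨(0, ψ), le_rfl, by simp [h.1], by simp [h.2], by simpa using hω.le, le_rfl⟩
    · obtain ⟨ρ, η, hρ, hx, hy⟩ : ∃ ρ η : ℝ, 0 ≤ ρ ∧ X v = X u + ρ * cos η ∧ Y v = Y u + ρ * sin η := by
        refine ⟨‖(⟨X v - X u, Y v - Y u⟩ : ℂ)‖, Complex.arg ⟨X v - X u, Y v - Y u⟩, norm_nonneg _, ?_, ?_⟩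
        · rw [Complex.norm_mul_cos_arg]; simp
        · rw [Complex.norm_mul_sin_arg]; simp
      have hρ' : 0 < ρ := by
        rcases hρ.eq_or_lt with h' | h'
        · exfalso; apply h; rw [hx, hy, ← h']; simp
        · exact h'
      obtain ⟨n, hn, -⟩ := existsUnique_add_zsmul_mem_Ico (show 0 < 2*π by positivity) η (ψ - π)
      rw [zsmul_eq_mul] at hn
      rw [← Real.cos_add_int_mul_two_pi η n] at hx
      rw [← Real.sin_add_int_mul_two_pi η n] at hy
      obtain ⟨η', hη'⟩ : ∃ η', η' = η + n * (2*π) := ⟨_, rfl⟩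
      rw [← hη'] at hx hy hn
      have k1 := hw.up v
      have k2 := hw.lo v
      rw [hx, hy, Lf_polar] at k1 k2
      have s1 : sin (η' - ψ) ≤ 0 := by by_contra h; nlinarith
      have s2 : 0 ≤ sin (η' - (ψ - ω)) := by by_contra h; nlinarith
      obtain ⟨r1, r2⟩ := range_off (ω := ω) (κ := ψ - η') hω hω' (by linarith [hn.2]) (by linarith [hn.1])
        (by rw [show ψ - η' = -(η' - ψ) by ring, Real.sin_neg]; linarith)
        (by rwa [show ω - (ψ - η') = η' - (ψ - ω) by ring])
      exact ⟨(ρ, η'), hρ, hx, hy, by dsimp only; linarith, by dsimp only; linarith⟩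
  choose f hf0 hfx hfy hf1 hf2 using hpol
  obtain ⟨v0, hv0⟩ := hne
  obtain ⟨b, hb, hmin⟩ := Finset.exists_min_image (Finset.univ.filter fun v => ¬ (X v = X u ∧ Y v = Y u))
    (fun v => (f v).2) ⟨v0, by simp only [Finset.mem_filter]; exact ⟨Finset.mem_univ _, hv0⟩⟩
  simp only [Finset.mem_filter, Finset.mem_univ, true_and] at hb hmin
  refine ⟨(f b).2, fun v => ?_, b, (f b).1, ?_, hfx b, hfy b⟩
  · by_cases h : X v = X u ∧ Y v = Y u
    · exact ⟨0, (f b).2, le_rfl, le_rfl, by linarith, by simp [h.1], by simp [h.2]⟩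
    · exact ⟨(f v).1, (f v).2, hf0 v, hmin v h, by linarith [hf2 v, hf1 b], hfx v, hfy v⟩
  · rcases (hf0 b).eq_or_lt with h | h
    · exfalso; apply hb
      have h1 := hfx b
      have h2 := hfy b
      rw [← h, zero_mul, add_zero] at h1 h2
      exact ⟨h1, h2⟩
    · exact h

lemma chain [Fintype ι] (hω : 0 < ω) (hω' : ω < π) {ψ : ℝ} {p q : ι}
    (hw : WW ω X Y (X u) (Y u) ψ p q) (hne : ∃ v, ¬ (X v = X u ∧ Y v = Y u))
    (m : ℕ) (c0 c1 r θ δ : Fin (m+1) → ℝ) (hr : ∀ i, 0 < r i) (hδ : ∀ i, 0 < δ i)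
    (hΩ : ∀ i, ∀ t ∈ Set.Icc (θ i) (θ i + δ i), ∃ φ p q, WW ω X Y (c0 i + r i * cos t) (c1 i + r i * sin t) φ p q)
    (hch : ∀ i : Fin m,
      c0 i.castSucc + r i.castSucc * cos (θ i.castSucc + δ i.castSucc) = c0 i.succ + r i.succ * cos (θ i.succ) ∧
      c1 i.castSucc + r i.castSucc * sin (θ i.castSucc + δ i.castSucc) = c1 i.succ + r i.succ * sin (θ i.succ))
    (hst : c0 0 + r 0 * cos (θ 0) = X u ∧ c1 0 + r 0 * sin (θ 0) = Y u)
    (hsum : ∑ i, δ i = 2 * (π - ω)) :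
    ∀ i, (X u - c0 i)^2 + (Y u - c1 i)^2 = (r i)^2 := by
  obtain ⟨β, hc⟩ := cone_exists hω hω' hw hne
  have hlt : ∀ i, ∑ j ∈ Finset.Iio i, δ j < 2 * (π - ω) := by
    intro i
    rw [← hsum]
    apply Finset.sum_lt_sum_of_subset (Finset.subset_univ _) (Finset.mem_univ i) (by simp) (hδ i)
    intro j _ _; exact (hδ j).le
  have hnn : ∀ i, 0 ≤ ∑ j ∈ Finset.Iio i, δ j := fun i => Finset.sum_nonneg fun j _ => (hδ j).le
  have key : ∀ i, ∃ p q, WW ω X Y (c0 i + r i * cos (θ i)) (c1 i + r i * sin (θ i))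
      (β + ω + (∑ j ∈ Finset.Iio i, δ j)/2) p q := by
    intro i
    induction i using Fin.induction with
    | zero =>
      refine ⟨u, u, ?_⟩
      have : Finset.Iio (0 : Fin (m+1)) = ∅ := by ext j; simp
      rw [hst.1, hst.2, this, Finset.sum_empty, zero_div, add_zero]
      exact hc.start hω hω'
    | succ i ih =>
      have e : ∑ j ∈ Finset.Iio i.succ, δ j = ∑ j ∈ Finset.Iio i.castSucc, δ j + δ i.castSucc := by
        have : Finset.Iio i.succ = insert i.castSucc (Finset.Iio i.castSucc) := by
          ext j; simp only [Finset.mem_Iio, Finset.mem_insert, Fin.lt_def, Fin.ext_iff, Fin.val_succ, Fin.val_castSucc]; omega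
        rw [this, Finset.sum_insert (by simp)]; ring
      have h1 := hlt i.succ
      rw [e] at h1
      have := (step hω hω' hc (hr i.castSucc) (hδ i.castSucc) (hΩ i.castSucc) 
        (by linarith [hnn i.castSucc]) (by linarith [hlt i.castSucc]) ih).2 (by linarith)
      rw [(hch i).1, (hch i).2] at this
      rw [e, show β + ω + (∑ j ∈ Finset.Iio i.castSucc, δ j + δ i.castSucc)/2 =
        β + ω + (∑ j ∈ Finset.Iio i.castSucc, δ j)/2 + δ i.castSucc/2 by ring]
      exact this
  intro i
  exact (step hω hω' hc (hr i) (hδ i) (hΩ i) (by linarith [hnn i]) (by linarith [hlt i]) (key i)).1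

lemma WW.reflect {x y φ : ℝ} {p q : ι} (h : WW ω X Y x y φ p q) :
    WW ω X (fun v => - Y v) x (-y) (ω - φ) q p := by
  have e1 : ∀ a b, Lf (ω - φ) a (-b) = - Lf (φ - ω) a b := by
    intro a b
    rw [show ω - φ = -(φ - ω) by ring]
    unfold Lf; rw [Real.cos_neg, Real.sin_neg]; ring
  have e2 : ∀ a b, Lf (ω - φ - ω) a (-b) = - Lf φ a b := by
    intro a b
    rw [show ω - φ - ω = -φ by ring]
    unfold Lf; rw [Real.cos_neg, Real.sin_neg]; ring
  constructor
  · intro v; rw [e1, e1]; linarith [h.lo v]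
  · intro v; rw [e2, e2]; linarith [h.up v]
  · rw [e1, e1, h.cq]
  · rw [e2, e2, h.cp]
end

lemma unitVec0 (θ : ℝ) : unitVec θ 0 = cos θ := by simp [unitVec]
lemma unitVec1 (θ : ℝ) : unitVec θ 1 = sin θ := by simp [unitVec]

lemma exists_unitVec (d : Plane) (h : ‖d‖ = 1) : ∃ θ, d 0 = cos θ ∧ d 1 = sin θ := by
  have h2 : (d 0)^2 + (d 1)^2 = 1 := by
    have := EuclideanSpace.norm_sq_eq d
    rw [h] at this
    simp [Fin.sum_univ_two] at this
    linarith
  have hn : ‖(⟨d 0, d 1⟩ : ℂ)‖ = 1 := by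
    rw [Complex.norm_def, Complex.normSq_mk, Real.sqrt_eq_one]; nlinarith
  refine ⟨Complex.arg ⟨d 0, d 1⟩, ?_, ?_⟩
  · have := Complex.norm_mul_cos_arg ⟨d 0, d 1⟩
    rw [hn, one_mul] at this; exact this.symm
  · have := Complex.norm_mul_sin_arg ⟨d 0, d 1⟩
    rw [hn, one_mul] at this; exact this.symm

lemma half_conv (A B k : ℝ) : Convex ℝ {z : Plane | A * z 0 + B * z 1 < k} := by
  intro a ha b hb s t hs ht hst
  simp only [Set.mem_ofPred_eq, PiLp.add_apply, PiLp.smul_apply, smul_eq_mul] at *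
  rcases hs.eq_or_lt with h | h
  · have : t = 1 := by linarith
    subst h; subst this; linarith
  · have h1 := mul_lt_mul_of_pos_left ha h
    have h2 := mul_le_mul_of_nonneg_left hb.le ht
    have h3 : s * k + t * k = k := by rw [← add_mul, hst, one_mul]
    linarith

lemma contact (V : Finset Plane) (A B k : ℝ) (y : Plane) (hy : y ∈ convexHull ℝ (V : Set Plane))
    (hk : k ≤ A * y 0 + B * y 1) : ∃ v ∈ V, k ≤ A * v 0 + B * v 1 := by
  by_contra h
  push Not at h
  have : A * y 0 + B * y 1 < k :=
    convexHull_min (s := (V : Set Plane)) (fun v hv => h v hv) (half_conv A B k) hy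
  linarith

lemma WW_of_oriented (V : Finset Plane) {ω : ℝ} (hω : 0 < ω) (hω' : ω < π) {x d₁ d₂ : Plane}
    (h : IsMinWedge (convexHull ℝ (V : Set Plane)) ω x d₁ d₂) {φ : ℝ} (h1 : d₁ 0 = cos φ) (h1' : d₁ 1 = sin φ)
    (h2 : d₂ 0 = cos (φ - ω)) (h2' : d₂ 1 = sin (φ - ω)) :
    ∃ φ, ∃ p q : {v // v ∈ V}, WW ω (fun v : {v // v ∈ V} => v.1 0) (fun v => v.1 1) (x 0) (x 1) φ p q := by
  have hs : 0 < sin ω := Real.sin_pos_of_pos_of_lt_pi hω hω'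
  obtain ⟨-, -, -, hsub, ⟨y1, hy1, t1, ht1, e1⟩, ⟨y2, hy2, t2, ht2, e2⟩⟩ := h
  have hup : ∀ v : {v // v ∈ V}, Lf φ (v.1 0) (v.1 1) ≤ Lf φ (x 0) (x 1) ∧
      Lf (φ - ω) (x 0) (x 1) ≤ Lf (φ - ω) (v.1 0) (v.1 1) := by
    rintro ⟨v, hv⟩
    obtain ⟨s, t, hs', ht', e⟩ := hsub (subset_convexHull ℝ _ hv)
    have a0 : v 0 = x 0 + s * cos φ + t * cos (φ - ω) := by rw [e]; simp [h1, h2]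
    have a1 : v 1 = x 1 + s * sin φ + t * sin (φ - ω) := by rw [e]; simp [h1', h2']
    dsimp only
    rw [a0, a1, Lf_polar, Lf_polar, Lf_polar, Lf_polar]
    have b1 : sin (φ - ω - φ) = - sin ω := by rw [← Real.sin_neg]; congr 1; ring
    have b2 : sin (φ - (φ - ω)) = sin ω := by congr 1; ring
    rw [b1, b2, sub_self, sub_self, Real.sin_zero]
    constructor <;> nlinarith [mul_nonneg hs' hs.le, mul_nonneg ht' hs.le]
  obtain ⟨p, hp, hp'⟩ := contact V (-sin φ) (cos φ) (Lf φ (x 0) (x 1)) y1 hy1 (by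
    have a0 : y1 0 = x 0 + t1 * cos φ := by rw [e1]; simp [h1]
    have a1 : y1 1 = x 1 + t1 * sin φ := by rw [e1]; simp [h1']
    rw [a0, a1]; unfold Lf; apply le_of_eq; ring)
  obtain ⟨q, hq, hq'⟩ := contact V (sin (φ-ω)) (-cos (φ-ω)) (-Lf (φ-ω) (x 0) (x 1)) y2 hy2 (by
    have a0 : y2 0 = x 0 + t2 * cos (φ-ω) := by rw [e2]; simp [h2]
    have a1 : y2 1 = x 1 + t2 * sin (φ-ω) := by rw [e2]; simp [h2']
    rw [a0, a1]; unfold Lf; apply le_of_eq; ring)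
  refine ⟨φ, ⟨p, hp⟩, ⟨q, hq⟩, fun v => (hup v).1, fun v => (hup v).2, ?_, ?_⟩
  · apply le_antisymm (hup ⟨p, hp⟩).1
    unfold Lf at *; dsimp only; linarith
  · apply le_antisymm _ (hup ⟨q, hq⟩).2
    unfold Lf at *; dsimp only; linarith

lemma IsMinWedge.swap {P : Set Plane} {ω : ℝ} {x d₁ d₂ : Plane} (h : IsMinWedge P ω x d₁ d₂) :
    IsMinWedge P ω x d₂ d₁ := by
  obtain ⟨a, b, c, d, e, f⟩ := h
  refine ⟨b, a, by rwa [InnerProductGeometry.angle_comm], fun y hy => ?_, f, e⟩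
  obtain ⟨s, t, hs, ht, e⟩ := d hy
  exact ⟨t, s, ht, hs, by rw [e]; abel⟩

lemma WW_of_cloud (V : Finset Plane) {ω : ℝ} (hω : 0 < ω) (hω' : ω < π) {x : Plane}
    (h : x ∈ omegaCloud (convexHull ℝ (V : Set Plane)) ω) :
    ∃ φ, ∃ p q : {v // v ∈ V}, WW ω (fun v : {v // v ∈ V} => v.1 0) (fun v => v.1 1) (x 0) (x 1) φ p q := by
  obtain ⟨d₁, d₂, hm⟩ := h
  obtain ⟨a, ha, ha'⟩ := exists_unitVec d₁ hm.1
  obtain ⟨b, hb, hb'⟩ := exists_unitVec d₂ hm.2.1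
  have hang : cos ω = cos (a - b) := by
    have h3 := hm.2.2.1
    rw [← h3, InnerProductGeometry.cos_angle, hm.1, hm.2.1, Real.cos_sub]
    simp [PiLp.inner_apply, Fin.sum_univ_two, ha, ha', hb, hb']
    ring
  rw [Real.cos_eq_cos_iff] at hang
  obtain ⟨k, hk | hk⟩ := hang
  · have e2 : b + k * (2*π) = a - ω := by linarith
    refine WW_of_oriented V hω hω' hm ha ha' ?_ ?_
    · rw [hb, ← e2, Real.cos_add_int_mul_two_pi]
    · rw [hb', ← e2, Real.sin_add_int_mul_two_pi]
  · have e2 : a - k * (2*π) = b - ω := by linarith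
    refine WW_of_oriented V hω hω' hm.swap hb hb' ?_ ?_
    · rw [ha, ← e2, Real.cos_sub_int_mul_two_pi]
    · rw [ha', ← e2, Real.sin_sub_int_mul_two_pi]


lemma plane_ext {a b : Plane} (h0 : a 0 = b 0) (h1 : a 1 = b 1) : a = b := by
  ext i; fin_cases i
  · exact h0
  · exact h1

lemma arc0 (c : Plane) (r t : ℝ) : (c + r • unitVec t) 0 = c 0 + r * cos t := by simp [unitVec0]
lemma arc1 (c : Plane) (r t : ℝ) : (c + r • unitVec t) 1 = c 1 + r * sin t := by simp [unitVec1]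

lemma dist_of_sq {u c : Plane} {r : ℝ} (hr : 0 < r) (h : (u 0 - c 0)^2 + (u 1 - c 1)^2 = r^2) :
    dist u c = r := by
  rw [EuclideanSpace.dist_eq, Fin.sum_univ_two, Real.dist_eq, Real.dist_eq, sq_abs, sq_abs, h, Real.sqrt_sq hr.le]


end helpers

/-- Let `u` be a narrow vertex (narrow pivot) of the `ω`-cloud, and let the portions of the
cloud ending at `u` (from `v`) and starting at `u` (to `w`), each of total angular measure
`2(π - ω)`, be given as clockwise chains of arcs. Then the supporting circle of every arc of
these portions passes through `u`. -/
theorem stmt_10 (V : Finset Plane) (hV : IsConvexPolygon V) (ω : ℝ) (hω : ω ∈ Set.Ioo 0 π)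
    (u : Plane) (hu : u ∈ V)
    (hnarrow : interiorAngle (convexHull ℝ (V : Set Plane)) u ≤ ω)
    (huΩ : u ∈ omegaCloud (convexHull ℝ (V : Set Plane)) ω)
    (m₁ m₂ : ℕ) (arcs₁ : Fin (m₁ + 1) → CircArc) (arcs₂ : Fin (m₂ + 1) → CircArc)
    (hprop₁ : ∀ i, 0 < (arcs₁ i).radius ∧ 0 < (arcs₁ i).delta)
    (hprop₂ : ∀ i, 0 < (arcs₂ i).radius ∧ 0 < (arcs₂ i).delta)
    (hsub₁ : ∀ i, (arcs₁ i).points ⊆ omegaCloud (convexHull ℝ (V : Set Plane)) ω)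
    (hsub₂ : ∀ i, (arcs₂ i).points ⊆ omegaCloud (convexHull ℝ (V : Set Plane)) ω)
    (hchain₁ : ∀ i : Fin m₁, (arcs₁ i.castSucc).cwEnd = (arcs₁ i.succ).cwStart)
    (hchain₂ : ∀ i : Fin m₂, (arcs₂ i.castSucc).cwEnd = (arcs₂ i.succ).cwStart)
    (hend₁ : (arcs₁ (Fin.last m₁)).cwEnd = u)
    (hstart₂ : (arcs₂ 0).cwStart = u)
    (hdisj₁ : ∀ i j, i ≠ j → Disjoint (arcs₁ i).intPoints (arcs₁ j).intPoints)
    (hdisj₂ : ∀ i j, i ≠ j → Disjoint (arcs₂ i).intPoints (arcs₂ j).intPoints)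
    (hdisj₁₂ : ∀ i j, Disjoint (arcs₁ i).intPoints (arcs₂ j).intPoints)
    (hsum₁ : ∑ i, (arcs₁ i).delta = 2 * (π - ω))
    (hsum₂ : ∑ i, (arcs₂ i).delta = 2 * (π - ω)) :
    (∀ i, dist u (arcs₁ i).center = (arcs₁ i).radius) ∧
    (∀ i, dist u (arcs₂ i).center = (arcs₂ i).radius) := by
  obtain ⟨hω1, hω2⟩ := hω
  have hVne : ∃ v : {v // v ∈ V}, v.1 ≠ u := by
    obtain ⟨v, hv, hvu⟩ := Finset.exists_mem_ne (s := V) (by have := hV.1; omega) u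
    exact ⟨⟨v, hv⟩, hvu⟩
  obtain ⟨v0, hv0⟩ := hVne
  obtain ⟨ψ, p, q, hw⟩ := WW_of_cloud V hω1 hω2 huΩ
  constructor
  · have key := chain (u := (⟨u, hu⟩ : {v // v ∈ V})) hω1 hω2 hw
      ⟨v0, fun h => hv0 (plane_ext h.1 h.2)⟩ m₁
      (fun i => (arcs₁ i.rev).center 0) (fun i => (arcs₁ i.rev).center 1) (fun i => (arcs₁ i.rev).radius)
      (fun i => (arcs₁ i.rev).start) (fun i => (arcs₁ i.rev).delta)
      (fun i => (hprop₁ _).1) (fun i => (hprop₁ _).2)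
      (fun i t ht => by
        have := WW_of_cloud V hω1 hω2 (hsub₁ i.rev ⟨t, ht, rfl⟩)
        rwa [arc0, arc1] at this)
      (fun i => by
        have h := hchain₁ i.rev
        unfold CircArc.cwEnd CircArc.cwStart at h
        rw [← Fin.rev_succ, ← Fin.rev_castSucc] at h
        have h0 := congrArg (fun z : Plane => z 0) h
        have h1 := congrArg (fun z : Plane => z 1) h
        dsimp only at h0 h1
        rw [arc0, arc0] at h0
        rw [arc1, arc1] at h1
        exact ⟨h0.symm, h1.symm⟩)
      (by
        have h := hend₁
        unfold CircArc.cwEnd at h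
        rw [← Fin.rev_zero] at h
        have h0 := congrArg (fun z : Plane => z 0) h
        have h1 := congrArg (fun z : Plane => z 1) h
        dsimp only at h0 h1
        rw [arc0] at h0
        rw [arc1] at h1
        exact ⟨h0, h1⟩)
      (by
        rw [← hsum₁]
        exact Equiv.sum_comp Fin.revPerm (fun i => (arcs₁ i).delta))
    intro i
    have := key i.rev
    rw [Fin.rev_rev] at this
    exact dist_of_sq (hprop₁ i).1 this
  · have key := chain (u := (⟨u, hu⟩ : {v // v ∈ V})) hω1 hω2 hw.reflect
      ⟨v0, fun h => hv0 (plane_ext h.1 (neg_injective h.2))⟩ m₂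
      (fun i => (arcs₂ i).center 0) (fun i => -(arcs₂ i).center 1) (fun i => (arcs₂ i).radius)
      (fun i => -((arcs₂ i).start + (arcs₂ i).delta)) (fun i => (arcs₂ i).delta)
      (fun i => (hprop₂ _).1) (fun i => (hprop₂ _).2)
      (fun i t ht => by
        obtain ⟨φ, p, q, h⟩ := WW_of_cloud V hω1 hω2 (hsub₂ i ⟨-t, ⟨by linarith [ht.2], by linarith [ht.1]⟩, rfl⟩)
        rw [arc0, arc1, Real.cos_neg, Real.sin_neg] at h
        have h' := h.reflect
        rw [show -((arcs₂ i).center 1 + (arcs₂ i).radius * -sin t) = -(arcs₂ i).center 1 + (arcs₂ i).radius * sin t by ring] at h'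
        exact ⟨_, _, _, h'⟩)
      (fun i => by
        have h := hchain₂ i
        unfold CircArc.cwEnd CircArc.cwStart at h
        have h0 := congrArg (fun z : Plane => z 0) h
        have h1 := congrArg (fun z : Plane => z 1) h
        dsimp only at h0 h1
        rw [arc0, arc0] at h0
        rw [arc1, arc1] at h1
        rw [show -((arcs₂ i.castSucc).start + (arcs₂ i.castSucc).delta) + (arcs₂ i.castSucc).delta = -(arcs₂ i.castSucc).start by ring]
        rw [Real.cos_neg, Real.sin_neg, Real.cos_neg, Real.sin_neg]
        exact ⟨h0, by linarith⟩)
      (by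
        have h := hstart₂
        unfold CircArc.cwStart at h
        have h0 := congrArg (fun z : Plane => z 0) h
        have h1 := congrArg (fun z : Plane => z 1) h
        dsimp only at h0 h1
        rw [arc0] at h0
        rw [arc1] at h1
        rw [Real.cos_neg, Real.sin_neg]
        exact ⟨h0, by dsimp only; linarith⟩)
      hsum₂
    intro i
    have := key i
    dsimp only at this
    exact dist_of_sq (hprop₂ i).1 (by linarith)

end
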